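/- arXiv:1708.08592 — 5 statements merged into one kernel-verified Lean document; each statement's English description precedes it below -/
import Mathlib

section
/- Let V be a stationary {0,1}-valued process as in the context which regenerates in the state 1, with μ(A_0) > 0. Fix n ≥ 1. For a subset I ⊆ {1,...,n−1} with elements i^I_1 < i^I_2 < ... < i^I_{|I|}, set i^I_0 = 0 and i^I_{|I|+1} = n. Then μ(A_0 ∩ (⋂_{k=1}^{n−1} A_kᶜ) ∩ A_n) = μ(A_0) · ∑_{I ⊆ {1,...,n−1}} (−1)^{|I|} ∏_{k=0}^{|I|} q_{i^I_{k+1} − i^I_k}, where the sum includes the summand for I = ∅. Equivalently, the interarrival probability p_n = P(V_n = 1 and V_k = 0 for all 0 < k < n | V_0 = 1) equals ∑_{I ⊆ {1,...,n−1}} (−1)^{|I|} ∏_{k=0}^{|I|} q_{i^I_{k+1} − i^I_k}. -/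
open MeasureTheory

/-- Given `q : ℤ → ℝ` and a list `[x₀, x₁, …, x_m]`, this is the product
`∏_{k=0}^{m-1} q (x_{k+1} - x_k)` over consecutive differences. -/
def chainProd (q : ℤ → ℝ) : List ℤ → ℝ
  | [] => 1
  | [_] => 1
  | x :: y :: l => q (y - x) * chainProd q (y :: l)

lemma chainProd_snoc (q : ℤ → ℝ) (l : List ℤ) (x y : ℤ) :
    chainProd q (l ++ [x] ++ [y]) = chainProd q (l ++ [x]) * q (y - x) := by
  induction l with
  | nil => simp [chainProd]
  | cons a l ih =>
    cases l with
    | nil => simp [chainProd]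
    | cons b l =>
      simp only [List.cons_append, chainProd] at ih ⊢
      rw [ih]; ring

lemma incl_excl {Ω : Type*} [MeasurableSpace Ω] (μ : Measure Ω) [IsProbabilityMeasure μ]
    (A : ℤ → Set Ω) (hA : ∀ n, MeasurableSet (A n)) (S : Finset ℤ) :
    ∀ B : Set Ω, MeasurableSet B →
      μ.real ((⋂ k ∈ S, (A k)ᶜ) ∩ B)
        = ∑ I ∈ S.powerset, (-1 : ℝ) ^ I.card * μ.real ((⋂ k ∈ I, A k) ∩ B) := by
  induction S using Finset.induction_on with
  | empty => intro B _; simp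
  | insert a S ha ih =>
    intro B hB
    rw [Finset.sum_powerset_insert ha, ← ih B hB]
    have h1 : ∀ I ∈ S.powerset,
        (-1 : ℝ) ^ (insert a I).card * μ.real ((⋂ k ∈ insert a I, A k) ∩ B)
          = - ((-1 : ℝ) ^ I.card * μ.real ((⋂ k ∈ I, A k) ∩ (A a ∩ B))) := by
      intro I hI
      have : a ∉ I := fun h => ha (Finset.mem_powerset.1 hI h)
      rw [Finset.card_insert_of_notMem this, Finset.set_biInter_insert, pow_succ]
      have e : (A a ∩ ⋂ k ∈ I, A k) ∩ B = (⋂ k ∈ I, A k) ∩ (A a ∩ B) := by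
        ext; simp only [Set.mem_inter_iff]; tauto
      rw [e]; ring
    rw [Finset.sum_congr rfl h1, Finset.sum_neg_distrib, ← ih _ ((hA a).inter hB)]
    have h2 := measureReal_inter_add_sdiff (μ := μ) (s := (⋂ k ∈ S, (A k)ᶜ) ∩ B) (hA a)
    rw [Finset.set_biInter_insert]
    have e1 : ((A a)ᶜ ∩ ⋂ k ∈ S, (A k)ᶜ) ∩ B = ((⋂ k ∈ S, (A k)ᶜ) ∩ B) \ A a := by
      ext; simp only [Set.mem_inter_iff, Set.mem_sdiff, Set.mem_compl_iff]; tauto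
    have e2 : (⋂ k ∈ S, (A k)ᶜ) ∩ (A a ∩ B) = ((⋂ k ∈ S, (A k)ᶜ) ∩ B) ∩ A a := by
      ext; simp only [Set.mem_inter_iff]; tauto
    rw [e1, e2]; linarith

/-- Summing the cylinder identities. -/
lemma cyl_sum {Ω : Type*} [MeasurableSpace Ω] (μ : Measure Ω)
    (r : ℕ) (C : Fin r → Set Ω) (hC : ∀ k, MeasurableSet (C k)) (B D : Set Ω)
    (h : ∀ a : Fin r → Bool,
      μ ((⋂ k, (if a k then C k else (C k)ᶜ)) ∩ B) * μ D
        = μ ((⋂ k, (if a k then C k else (C k)ᶜ)) ∩ D) * μ B) (j : Fin r) :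
    μ (C j ∩ B) * μ D = μ (C j ∩ D) * μ B := by
  classical
  let f : Ω → (Fin r → Bool) := fun ω k => decide (ω ∈ C k)
  have hf : ∀ a, f ⁻¹' {a} = ⋂ k, (if a k then C k else (C k)ᶜ) := by
    intro a; ext ω
    simp only [Set.mem_preimage, Set.mem_singleton_iff, Set.mem_iInter, funext_iff, f]
    refine forall_congr' fun k => ?_
    cases a k <;> simp
  have hm : ∀ a, MeasurableSet (f ⁻¹' {a}) := by
    intro a; rw [hf]
    refine MeasurableSet.iInter fun k => ?_
    cases a k
    · simpa using (hC k)
    · simpa using hC k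
  have key : ∀ E, μ (C j ∩ E) = ∑ a ∈ Finset.univ.filter (fun a : Fin r → Bool => a j = true),
      μ ((⋂ k, (if a k then C k else (C k)ᶜ)) ∩ E) := by
    intro E
    have := sum_measure_preimage_singleton (μ := μ.restrict E)
      (Finset.univ.filter (fun a : Fin r → Bool => a j = true)) (f := f) (fun a _ => hm a)
    have e : f ⁻¹' (Finset.univ.filter (fun a : Fin r → Bool => a j = true) : Finset _) = C j := by
      ext ω; simp [f]
    rw [e, Measure.restrict_apply (hC j)] at this
    rw [← this]
    refine Finset.sum_congr rfl fun a _ => ?_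
    rw [Measure.restrict_apply (hm a), hf]
  rw [key B, key D, Finset.sum_mul, Finset.sum_mul]
  exact Finset.sum_congr rfl fun a _ => h a

lemma list_prob {Ω : Type*} [MeasurableSpace Ω] (μ : Measure Ω) [IsProbabilityMeasure μ]
    (A : ℤ → Set Ω) (hA : ∀ n, MeasurableSet (A n))
    (hstat : ∀ (m : ℤ) (F : Finset ℤ) (ε : ℤ → Bool),
      μ (⋂ n ∈ F, (if ε n then A n else (A n)ᶜ))
        = μ (⋂ n ∈ F, (if ε n then A (n + m) else (A (n + m))ᶜ)))
    (hpos : 0 < μ (A 0))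
    (q : ℤ → ℝ) (hq : ∀ d : ℤ, 1 ≤ d → q d = (μ (A d ∩ A 0)).toReal / (μ (A 0)).toReal)
    (hreg : ∀ (n r : ℕ) (i : Fin (n + 1) → ℤ), StrictMono i → 1 ≤ r →
      ∀ a : Fin r → Bool,
        μ ((⋂ k : Fin r, (if a k then A (i (Fin.last n) + (k : ℤ) + 1)
              else (A (i (Fin.last n) + (k : ℤ) + 1))ᶜ)) ∩ ⋂ j, A (i j))
            * μ (A (i (Fin.last n)))
          = μ ((⋂ k : Fin r, (if a k then A (i (Fin.last n) + (k : ℤ) + 1)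
              else (A (i (Fin.last n) + (k : ℤ) + 1))ᶜ)) ∩ A (i (Fin.last n)))
            * μ (⋂ j, A (i j))) (l : List ℤ) :
    l ≠ [] → l.Pairwise (· < ·) →
      μ.real (⋂ x ∈ l, A x) = μ.real (A 0) * chainProd q l := by
  have hs1 : ∀ x, μ (A x) = μ (A 0) := by
    intro x
    have := hstat x {0} (fun _ => true)
    simpa using this.symm
  have hs2 : ∀ x y, μ (A y ∩ A x) = μ (A (y - x) ∩ A 0) := by
    intro x y
    have := hstat x {y - x, 0} (fun _ => true)
    simpa [Finset.set_biInter_insert] using this.symm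
  have hp : μ.real (A 0) ≠ 0 := by
    rw [measureReal_def]
    exact (ENNReal.toReal_pos hpos.ne' (measure_ne_top _ _)).ne'
  induction l using List.reverseRecOn with
  | nil => simp
  | append_singleton l y ih =>
    intro _ hl
    rcases List.eq_nil_or_concat l with rfl | ⟨l', x, rfl⟩
    · simp [chainProd, measureReal_def, hs1 y]
    · rw [List.concat_eq_append] at *
      rw [List.pairwise_append] at hl
      obtain ⟨hl1, -, hl2⟩ := hl
      have hxy : x < y := hl2 x (by simp) y (by simp)
      rw [chainProd_snoc, ← mul_assoc, ← ih (by simp) hl1]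
      have hlen : (l' ++ [x]).length = l'.length + 1 := by simp
      let i : Fin (l'.length + 1) → ℤ := fun j => (l' ++ [x]).get (j.cast hlen.symm)
      have hi : StrictMono i := by
        intro a b hab
        exact List.pairwise_iff_get.1 hl1 _ _ (by simpa using hab)
      have hlast : i (Fin.last _) = x := by simp [i]
      have hinter : ⋂ j, A (i j) = ⋂ z ∈ l' ++ [x], A z := by
        ext ω
        simp only [Set.mem_iInter]
        constructor
        · intro h z hz
          obtain ⟨k, rfl⟩ := List.get_of_mem hz
          exact h (k.cast hlen)
        · intro h j
          exact h _ (List.get_mem _ _)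
      obtain ⟨d, hd⟩ : ∃ d : ℕ, y = x + d + 1 := ⟨(y - x - 1).toNat, by omega⟩
      have h := cyl_sum μ (d + 1) (fun k => A (i (Fin.last _) + (k : ℤ) + 1)) (fun k => hA _)
        (⋂ j, A (i j)) (A (i (Fin.last _)))
        (hreg l'.length (d + 1) i hi (by omega)) (Fin.last d)
      simp only [hlast, hinter, Fin.val_last, ← hd] at h
      have e : (⋂ z ∈ l' ++ [x] ++ [y], A z) = A y ∩ ⋂ z ∈ l' ++ [x], A z := by
        ext ω
        simp only [Set.mem_iInter, Set.mem_inter_iff, List.mem_append, List.mem_singleton]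
        constructor
        · exact fun h => ⟨h _ (Or.inr rfl), fun z hz => h z (Or.inl hz)⟩
        · rintro ⟨h1, h2⟩ z (hz | rfl)
          · exact h2 z hz
          · exact h1
      rw [e, hq _ (by omega)]
      rw [hs1, hs2] at h
      have h' := congrArg ENNReal.toReal h
      rw [ENNReal.toReal_mul, ENNReal.toReal_mul] at h'
      simp only [measureReal_def] at hp ⊢
      field_simp
      linarith

/-- For a stationary `{0,1}`-valued process `V` (with `A n` the event
`{V n = 1}`) which regenerates in the state `1`, with `μ (A 0) > 0` and transition
probabilities `q d = μ (A d ∩ A 0) / μ (A 0)` for `d ≥ 1`, for every `n ≥ 1`: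
`μ (A 0 ∩ (⋂_{0<k<n} (A k)ᶜ) ∩ A n)
  = μ (A 0) * ∑_{I ⊆ {1,…,n-1}} (-1)^|I| ∏_{k=0}^{|I|} q (iᴵ_{k+1} - iᴵ_k)`,
where, for `I` with sorted elements `iᴵ_1 < … < iᴵ_{|I|}`, one sets `iᴵ_0 = 0` and
`iᴵ_{|I|+1} = n`, and the sum includes the summand for `I = ∅`.  Equivalently, the
interarrival probability `p_n = P(V_n = 1, V_k = 0 for 0 < k < n | V_0 = 1)` equals
this alternating sum. -/
theorem stmt3 {Ω : Type*} [MeasurableSpace Ω] (μ : Measure Ω) [IsProbabilityMeasure μ]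
    (A : ℤ → Set Ω) (hA : ∀ n, MeasurableSet (A n))
    (hstat : ∀ (m : ℤ) (F : Finset ℤ) (ε : ℤ → Bool),
      μ (⋂ n ∈ F, (if ε n then A n else (A n)ᶜ))
        = μ (⋂ n ∈ F, (if ε n then A (n + m) else (A (n + m))ᶜ)))
    (hpos : 0 < μ (A 0))
    (q : ℤ → ℝ) (hq : ∀ d : ℤ, 1 ≤ d → q d = (μ (A d ∩ A 0)).toReal / (μ (A 0)).toReal)
    (hreg : ∀ (n r : ℕ) (i : Fin (n + 1) → ℤ), StrictMono i → 1 ≤ r →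
      ∀ a : Fin r → Bool,
        μ ((⋂ k : Fin r, (if a k then A (i (Fin.last n) + (k : ℤ) + 1)
              else (A (i (Fin.last n) + (k : ℤ) + 1))ᶜ)) ∩ ⋂ j, A (i j))
            * μ (A (i (Fin.last n)))
          = μ ((⋂ k : Fin r, (if a k then A (i (Fin.last n) + (k : ℤ) + 1)
              else (A (i (Fin.last n) + (k : ℤ) + 1))ᶜ)) ∩ A (i (Fin.last n)))
            * μ (⋂ j, A (i j))) :
    ∀ n : ℤ, 1 ≤ n →
      (μ (A 0 ∩ (⋂ k ∈ Finset.Ioo (0 : ℤ) n, (A k)ᶜ) ∩ A n)).toReal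
        = (μ (A 0)).toReal *
            ∑ I ∈ (Finset.Ioo (0 : ℤ) n).powerset,
              (-1 : ℝ) ^ I.card * chainProd q (0 :: (Finset.sort I (· ≤ ·) ++ [n]))
      ∧ (μ (A 0 ∩ (⋂ k ∈ Finset.Ioo (0 : ℤ) n, (A k)ᶜ) ∩ A n)).toReal / (μ (A 0)).toReal
        = ∑ I ∈ (Finset.Ioo (0 : ℤ) n).powerset,
            (-1 : ℝ) ^ I.card * chainProd q (0 :: (Finset.sort I (· ≤ ·) ++ [n])) := by
  intro n hn
  have hp : (μ (A 0)).toReal ≠ 0 :=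
    (ENNReal.toReal_pos hpos.ne' (measure_ne_top _ _)).ne'
  have main : (μ (A 0 ∩ (⋂ k ∈ Finset.Ioo (0 : ℤ) n, (A k)ᶜ) ∩ A n)).toReal
        = (μ (A 0)).toReal *
            ∑ I ∈ (Finset.Ioo (0 : ℤ) n).powerset,
              (-1 : ℝ) ^ I.card * chainProd q (0 :: (Finset.sort I (· ≤ ·) ++ [n])) := by
    have h := incl_excl μ A hA (Finset.Ioo (0 : ℤ) n) (A 0 ∩ A n) ((hA 0).inter (hA n))
    have e : A 0 ∩ (⋂ k ∈ Finset.Ioo (0 : ℤ) n, (A k)ᶜ) ∩ A n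
        = (⋂ k ∈ Finset.Ioo (0 : ℤ) n, (A k)ᶜ) ∩ (A 0 ∩ A n) := by
      ext; simp only [Set.mem_inter_iff]; tauto
    rw [e, ← measureReal_def, h, Finset.mul_sum]
    refine Finset.sum_congr rfl fun I hI => ?_
    have hI' : ∀ z ∈ I, 0 < z ∧ z < n := fun z hz =>
      Finset.mem_Ioo.1 (Finset.mem_powerset.1 hI hz)
    have hl := list_prob μ A hA hstat hpos q hq hreg (0 :: (Finset.sort I (· ≤ ·) ++ [n]))
      (by simp) (by
        rw [List.pairwise_cons, List.pairwise_append]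
        refine ⟨?_, ?_, by simp, ?_⟩
        · intro z hz
          simp only [List.mem_append, Finset.mem_sort, List.mem_singleton] at hz
          rcases hz with hz | rfl
          · exact (hI' z hz).1
          · omega
        · exact (Finset.sortedLT_sort I).pairwise
        · intro z hz w hw
          simp only [Finset.mem_sort, List.mem_singleton] at hz hw
          subst hw
          exact (hI' z hz).2)
    have e2 : (⋂ z ∈ 0 :: (Finset.sort I (· ≤ ·) ++ [n]), A z)
        = (⋂ k ∈ I, A k) ∩ (A 0 ∩ A n) := by
      ext ω
      simp only [Set.mem_iInter, Set.mem_inter_iff, List.mem_cons, List.mem_append,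
        Finset.mem_sort, List.not_mem_nil, or_false]
      constructor
      · exact fun h => ⟨fun z hz => h z (Or.inr (Or.inl hz)), h _ (Or.inl rfl),
          h _ (Or.inr (Or.inr rfl))⟩
      · rintro ⟨h1, h2, h3⟩ z (rfl | hz | rfl)
        · exact h2
        · exact h1 z hz
        · exact h3
    rw [← e2, hl, measureReal_def]
    ring
  refine ⟨main, ?_⟩
  rw [main, mul_div_cancel_left₀ _ hp]
end

section
/- Under the hypotheses of the context, for every integer n ≥ 1, μ({ω : K ⊆ Γ_n(ω)} ∩ {ω : K ⊆ Γ_0(ω)}) = exp(−(1 − a^{−n})·L) · μ({ω : K ⊆ Γ_0(ω)}); that is, the transition probability q_n = P(K ⊆ Γ_n | K ⊆ Γ_0) of the {0,1}-valued sequence V^K_n = 1_{K ⊆ Γ_n} equals exp(−(1 − a^{−n})·L). -/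
open MeasureTheory ProbabilityTheory Pointwise

/-- Under the hypotheses of the context (pathwise recursion, marginal
probabilities `μ {c•K ⊆ Γ n} = μ {c•K ⊆ C n} = exp (-c·L)`, and independence of the
σ-algebra of the events `{c•K ⊆ C (n+1)}` from the past), for every integer `n ≥ 1`,
`μ ({K ⊆ Γ n} ∩ {K ⊆ Γ 0}) = exp (-(1 - a^{-n})·L) · μ {K ⊆ Γ 0}`; that is, the
transition probability `qₙ = P(K ⊆ Γ n | K ⊆ Γ 0)` of the `{0,1}`-valued sequence
`Vᴷ n = 1_{K ⊆ Γ n}` equals `exp (-(1 - a^{-n})·L)`. -/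
theorem stmt7 {ℓ : ℕ} (hℓ : 1 ≤ ℓ) (K : Set (EuclideanSpace ℝ (Fin ℓ)))
    (hKcomp : IsCompact K) (hKconv : Convex ℝ K)
    (hK0 : (0 : EuclideanSpace ℝ (Fin ℓ)) ∈ interior K)
    (L a : ℝ) (hL : 0 < L) (ha : 1 < a)
    {Ω : Type*} [MeasurableSpace Ω] (μ : Measure Ω) [IsProbabilityMeasure μ]
    (Γ C : ℤ → Ω → Set (EuclideanSpace ℝ (Fin ℓ)))
    (hrec : ∀ (n : ℤ) (ω : Ω), Γ (n + 1) ω = (a • Γ n ω) ∩ ((a / (a - 1)) • C (n + 1) ω))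
    (hmeasΓ : ∀ (n : ℤ) (c : ℝ), 0 < c → MeasurableSet {ω | c • K ⊆ Γ n ω})
    (hmeasC : ∀ (n : ℤ) (c : ℝ), 0 < c → MeasurableSet {ω | c • K ⊆ C n ω})
    (hprobΓ : ∀ (n : ℤ) (c : ℝ), 0 < c →
      μ {ω | c • K ⊆ Γ n ω} = ENNReal.ofReal (Real.exp (-(c * L))))
    (hprobC : ∀ (n : ℤ) (c : ℝ), 0 < c →
      μ {ω | c • K ⊆ C n ω} = ENNReal.ofReal (Real.exp (-(c * L))))
    (hindep : ∀ n : ℤ,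
      Indep
        (MeasurableSpace.generateFrom {s | ∃ c : ℝ, 0 < c ∧ s = {ω | c • K ⊆ C (n + 1) ω}})
        (MeasurableSpace.generateFrom {s | ∃ m : ℤ, m ≤ n ∧ ∃ c : ℝ, 0 < c ∧
          (s = {ω | c • K ⊆ Γ m ω} ∨ s = {ω | c • K ⊆ C m ω})}) μ) :
    ∀ n : ℤ, 1 ≤ n →
      μ ({ω | K ⊆ Γ n ω} ∩ {ω | K ⊆ Γ 0 ω})
        = ENNReal.ofReal (Real.exp (-((1 - a ^ (-n)) * L))) * μ {ω | K ⊆ Γ 0 ω} := by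
  have ha0 : 0 < a := by linarith
  have ha1 : 0 < a - 1 := by linarith
  have hEvt : ∀ (n : ℤ) (c : ℝ), {ω | c • K ⊆ Γ (n + 1) ω}
      = {ω | (c * ((a - 1) / a)) • K ⊆ C (n + 1) ω} ∩ {ω | (c / a) • K ⊆ Γ n ω} := by
    intro n c
    ext ω
    simp only [Set.mem_ofPred_eq, Set.mem_inter_iff]
    rw [hrec, Set.subset_inter_iff, Set.subset_smul_set_iff₀ ha0.ne',
      Set.subset_smul_set_iff₀ (div_pos ha0 ha1).ne', smul_smul, smul_smul, and_comm]
    have e1 : (a / (a - 1))⁻¹ * c = c * ((a - 1) / a) := by rw [inv_div, mul_comm]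
    have e2 : a⁻¹ * c = c / a := by rw [div_eq_mul_inv, mul_comm]
    rw [e1, e2]
  have hE1 : {ω | K ⊆ Γ 0 ω} = {ω | (1 : ℝ) • K ⊆ Γ 0 ω} := by simp
  have key : ∀ (n : ℕ) (c : ℝ), 0 < c →
      μ ({ω | c • K ⊆ Γ (n : ℤ) ω} ∩ {ω | K ⊆ Γ 0 ω})
        = ENNReal.ofReal (Real.exp (-(c * (1 - (a ^ n)⁻¹) * L)))
          * μ ({ω | (c * (a ^ n)⁻¹) • K ⊆ Γ 0 ω} ∩ {ω | K ⊆ Γ 0 ω}) := by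
    intro n
    induction n with
    | zero => intro c hc; simp
    | succ n ih =>
      intro c hc
      have hc1 : 0 < c * ((a - 1) / a) := by positivity
      have hc2 : 0 < c / a := by positivity
      push_cast
      rw [hEvt, Set.inter_assoc]
      rw [(Indep_iff _ _ μ).mp (hindep (n : ℤ)) _ _
        (MeasurableSpace.measurableSet_generateFrom ⟨_, hc1, rfl⟩)
        (MeasurableSet.inter
          (MeasurableSpace.measurableSet_generateFrom ⟨_, le_rfl, _, hc2, Or.inl rfl⟩)
          (MeasurableSpace.measurableSet_generateFrom
            ⟨0, by positivity, 1, one_pos, Or.inl hE1⟩)),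
        hprobC _ _ hc1, ih _ hc2, ← mul_assoc, ← ENNReal.ofReal_mul (Real.exp_pos _).le,
        ← Real.exp_add]
      have e1 : -(c * ((a - 1) / a) * L) + -(c / a * (1 - (a ^ n)⁻¹) * L)
          = -(c * (1 - (a ^ (n + 1))⁻¹) * L) := by
        field_simp
        ring
      have e2 : c / a * (a ^ n)⁻¹ = c * (a ^ (n + 1))⁻¹ := by
        field_simp
        ring
      rw [e1, e2]
  intro n hn
  lift n to ℕ using by omega
  have h := key n 1 one_pos
  have hsub : {ω | (1 * (a ^ n)⁻¹) • K ⊆ Γ 0 ω} ∩ {ω | K ⊆ Γ 0 ω} = {ω | K ⊆ Γ 0 ω} := by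
    apply Set.inter_eq_right.mpr
    intro ω hω
    refine Set.Subset.trans ?_ hω
    rintro _ ⟨x, hx, rfl⟩
    rw [one_mul]
    exact hKconv.smul_mem_of_zero_mem (interior_subset hK0) hx
      ⟨by positivity, inv_le_one_of_one_le₀ (one_le_pow₀ ha.le)⟩
  rw [hsub] at h
  simpa using h
end

section
/- Under the hypotheses of the context, for every n ≥ 0 and all integers i_0 < i_1 < ... < i_n, μ(⋂_{l=0}^n {ω : K ⊆ Γ_{i_l}(ω)}) = exp( (−(n+1) + ∑_{l=1}^n a^{−(i_l − i_{l−1})}) · L ). -/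
open MeasureTheory ProbabilityTheory Pointwise

/-- Under the hypotheses of the context, for every `n ≥ 0` and all
integers `i 0 < i 1 < … < i n`,
`μ (⋂_{l=0}^n {K ⊆ Γ (i l)}) = exp ((-(n+1) + ∑_{l=1}^n a^{-(i_l - i_{l-1})}) · L)`. -/
theorem stmt8 {ℓ : ℕ} (hℓ : 1 ≤ ℓ) (K : Set (EuclideanSpace ℝ (Fin ℓ)))
    (hKcomp : IsCompact K) (hKconv : Convex ℝ K)
    (hK0 : (0 : EuclideanSpace ℝ (Fin ℓ)) ∈ interior K)
    (L a : ℝ) (hL : 0 < L) (ha : 1 < a)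
    {Ω : Type*} [MeasurableSpace Ω] (μ : Measure Ω) [IsProbabilityMeasure μ]
    (Γ C : ℤ → Ω → Set (EuclideanSpace ℝ (Fin ℓ)))
    (hrec : ∀ (n : ℤ) (ω : Ω), Γ (n + 1) ω = (a • Γ n ω) ∩ ((a / (a - 1)) • C (n + 1) ω))
    (hmeasΓ : ∀ (n : ℤ) (c : ℝ), 0 < c → MeasurableSet {ω | c • K ⊆ Γ n ω})
    (hmeasC : ∀ (n : ℤ) (c : ℝ), 0 < c → MeasurableSet {ω | c • K ⊆ C n ω})
    (hprobΓ : ∀ (n : ℤ) (c : ℝ), 0 < c →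
      μ {ω | c • K ⊆ Γ n ω} = ENNReal.ofReal (Real.exp (-(c * L))))
    (hprobC : ∀ (n : ℤ) (c : ℝ), 0 < c →
      μ {ω | c • K ⊆ C n ω} = ENNReal.ofReal (Real.exp (-(c * L))))
    (hindep : ∀ n : ℤ,
      Indep
        (MeasurableSpace.generateFrom {s | ∃ c : ℝ, 0 < c ∧ s = {ω | c • K ⊆ C (n + 1) ω}})
        (MeasurableSpace.generateFrom {s | ∃ m : ℤ, m ≤ n ∧ ∃ c : ℝ, 0 < c ∧
          (s = {ω | c • K ⊆ Γ m ω} ∨ s = {ω | c • K ⊆ C m ω})}) μ) :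
    ∀ (n : ℕ) (i : Fin (n + 1) → ℤ), StrictMono i →
      μ (⋂ l : Fin (n + 1), {ω | K ⊆ Γ (i l) ω})
        = ENNReal.ofReal (Real.exp
            ((-(n + 1 : ℝ) + ∑ l : Fin n, a ^ (-(i l.succ - i l.castSucc))) * L)) := by
  have ha0 : 0 < a := by linarith
  have ha1 : 0 < a - 1 := by linarith
  have hane : a ≠ 0 := ha0.ne'
  have ha1ne : a - 1 ≠ 0 := ha1.ne'
  let F : ℤ → MeasurableSpace Ω := fun n =>
    MeasurableSpace.generateFrom {s | ∃ m : ℤ, m ≤ n ∧ ∃ c : ℝ, 0 < c ∧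
          (s = {ω | c • K ⊆ Γ m ω} ∨ s = {ω | c • K ⊆ C m ω})}
  have hF : Monotone F := by
    intro n m hnm
    apply MeasurableSpace.generateFrom_mono
    rintro s ⟨k, hk, h⟩
    exact ⟨k, hk.trans hnm, h⟩
  have hFΓ : ∀ (n : ℤ) (c : ℝ), 0 < c → MeasurableSet[F n] {ω | c • K ⊆ Γ n ω} := by
    intro n c hc
    exact MeasurableSpace.measurableSet_generateFrom ⟨n, le_rfl, c, hc, Or.inl rfl⟩
  have hset : ∀ (n : ℤ) (c : ℝ), {ω | c • K ⊆ Γ (n + 1) ω} =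
      {ω | (c / a) • K ⊆ Γ n ω} ∩ {ω | (c * (a - 1) / a) • K ⊆ C (n + 1) ω} := by
    intro n c
    ext ω
    have h1 : a⁻¹ * c = c / a := by field_simp
    have h2 : (a / (a - 1))⁻¹ * c = c * (a - 1) / a := by field_simp
    simp only [Set.mem_ofPred_eq, Set.mem_inter_iff, hrec n ω, Set.subset_inter_iff]
    rw [Set.subset_smul_set_iff₀ hane, Set.subset_smul_set_iff₀ (div_ne_zero hane ha1ne),
      smul_smul, smul_smul, h1, h2]
  have hstep : ∀ (n : ℤ) (c : ℝ), 0 < c → ∀ A, MeasurableSet[F n] A →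
      μ (A ∩ {ω | c • K ⊆ Γ (n + 1) ω}) =
        μ (A ∩ {ω | (c / a) • K ⊆ Γ n ω}) *
          ENNReal.ofReal (Real.exp (-((c * (a - 1) / a) * L))) := by
    intro n c hc A hA
    have hc' : 0 < c * (a - 1) / a := by positivity
    have hc2 : 0 < c / a := by positivity
    rw [hset, ← Set.inter_assoc, Set.inter_comm, ← hprobC (n + 1) _ hc',
      mul_comm (μ (A ∩ _))]
    refine (Indep_iff _ _ μ).1 (hindep n) _ _ ?_ ?_
    · exact MeasurableSpace.measurableSet_generateFrom ⟨_, hc', rfl⟩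
    · exact MeasurableSet.inter hA (hFΓ n _ hc2)
  have hk : ∀ (k : ℕ) (n : ℤ) (c : ℝ), 0 < c → ∀ A, MeasurableSet[F n] A →
      μ (A ∩ {ω | c • K ⊆ Γ (n + k) ω}) =
        μ (A ∩ {ω | (c / a ^ k) • K ⊆ Γ n ω}) *
          ENNReal.ofReal (Real.exp (-((c * (1 - 1 / a ^ k)) * L))) := by
    intro k
    induction k with
    | zero => intro n c hc A hA; simp
    | succ k ih =>
      intro n c hc A hA
      have e : n + ((k + 1 : ℕ) : ℤ) = (n + k) + 1 := by push_cast; ring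
      have hc2 : 0 < c / a := by positivity
      rw [e, hstep (n + k) c hc A (hF (by omega) _ hA), ih n (c / a) hc2 A hA, mul_assoc,
        ← ENNReal.ofReal_mul (Real.exp_pos _).le, ← Real.exp_add]
      congr 3
      · rw [div_div, pow_succ']
      · field_simp
        ring
  have hsub : ∀ t : ℝ, 0 ≤ t → t ≤ 1 → t • K ⊆ K := by
    rintro t h0 h1 _ ⟨x, hx, rfl⟩
    exact hKconv.smul_mem_of_zero_mem (interior_subset hK0) hx ⟨h0, h1⟩
  have hFi : ∀ (n : ℤ), MeasurableSet[F n] {ω | K ⊆ Γ n ω} := by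
    intro n; simpa using hFΓ n 1 one_pos
  intro n
  induction n with
  | zero =>
    intro i _
    have := hprobΓ (i 0) 1 one_pos
    have e : (⋂ l : Fin (0 + 1), {ω | K ⊆ Γ (i l) ω}) = {ω | K ⊆ Γ (i 0) ω} := by
      ext ω
      simp only [Set.mem_iInter]
      exact ⟨fun h => h 0, fun h l => by rw [show l = 0 from Fin.ext (by omega)]; exact h⟩
    rw [e]
    simpa using this
  | succ n ih =>
    intro i hi
    set A : Set Ω := ⋂ l : Fin (n + 1), {ω | K ⊆ Γ (i l.castSucc) ω} with hAdef
    have hA : MeasurableSet[F (i (Fin.last n).castSucc)] A := by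
      refine MeasurableSet.iInter fun l => ?_
      exact hF (hi.monotone (Fin.castSucc_le_castSucc_iff.2 (Fin.le_last l))) _ (hFi _)
    have hAeq : (⋂ l : Fin (n + 1 + 1), {ω | K ⊆ Γ (i l) ω}) =
        A ∩ {ω | K ⊆ Γ (i (Fin.last (n + 1))) ω} := by
      ext ω
      simp only [hAdef, Set.mem_iInter, Set.mem_inter_iff, Set.mem_ofPred_eq]
      exact Fin.forall_fin_succ'
    have hlt : i (Fin.last n).castSucc < i (Fin.last (n + 1)) := hi (Fin.castSucc_lt_last _)
    obtain ⟨k, hkk⟩ := Int.eq_ofNat_of_zero_le (sub_nonneg.2 hlt.le)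
    have hik : i (Fin.last (n + 1)) = i (Fin.last n).castSucc + k := by omega
    have h := hk k (i (Fin.last n).castSucc) 1 one_pos A hA
    have hAsub : A ∩ {ω | ((1 : ℝ) / a ^ k) • K ⊆ Γ (i (Fin.last n).castSucc) ω} = A := by
      apply Set.inter_eq_left.2
      intro ω hω
      have hp : 1 ≤ a ^ k := one_le_pow₀ ha.le
      refine (hsub _ (by positivity) ?_).trans (Set.mem_iInter.1 hω (Fin.last n))
      rw [div_le_one (by positivity)]; exact hp
    rw [hAsub, ← hik] at h
    simp only [one_smul] at h
    rw [hAeq, h, ih (fun l => i l.castSucc) (fun x y hxy => hi (Fin.castSucc_lt_castSucc_iff.2 hxy)),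
      ← ENNReal.ofReal_mul (Real.exp_pos _).le, ← Real.exp_add, Fin.sum_univ_castSucc]
    congr 2
    have e1 : a ^ (-(i (Fin.last n).succ - i (Fin.last n).castSucc)) = 1 / a ^ k := by
      rw [Fin.succ_last, hkk, zpow_neg, zpow_natCast, one_div]
    rw [e1]
    simp only [Fin.succ_castSucc]
    push_cast
    ring
end

section
/- Under the hypotheses of the context, for every n ∈ ℤ, μ({ω : a•K ⊆ Γ_n(ω)} ∩ {ω : K ⊆ Γ_n(ω)} ∩ {ω : K ⊆ Γ_{n−1}(ω)}) = exp(−(a + a^{−1} − 2)·L) · μ({K ⊆ Γ_n} ∩ {K ⊆ Γ_{n−1}}); that is, P(a•K ⊆ Γ_n | K ⊆ Γ_n and K ⊆ Γ_{n−1}) = exp(−(a + a^{−1} − 2)·L). -/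
open MeasureTheory ProbabilityTheory Pointwise

/-- Under the hypotheses of the context, for every `n ∈ ℤ`,
`μ ({a•K ⊆ Γ n} ∩ {K ⊆ Γ n} ∩ {K ⊆ Γ (n-1)})
  = exp (-(a + a⁻¹ - 2)·L) · μ ({K ⊆ Γ n} ∩ {K ⊆ Γ (n-1)})`;
that is, `P(a•K ⊆ Γ n | K ⊆ Γ n and K ⊆ Γ (n-1)) = exp (-(a + a⁻¹ - 2)·L)`. -/
theorem stmt10 {ℓ : ℕ} (hℓ : 1 ≤ ℓ) (K : Set (EuclideanSpace ℝ (Fin ℓ)))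
    (hKcomp : IsCompact K) (hKconv : Convex ℝ K)
    (hK0 : (0 : EuclideanSpace ℝ (Fin ℓ)) ∈ interior K)
    (L a : ℝ) (hL : 0 < L) (ha : 1 < a)
    {Ω : Type*} [MeasurableSpace Ω] (μ : Measure Ω) [IsProbabilityMeasure μ]
    (Γ C : ℤ → Ω → Set (EuclideanSpace ℝ (Fin ℓ)))
    (hrec : ∀ (n : ℤ) (ω : Ω), Γ (n + 1) ω = (a • Γ n ω) ∩ ((a / (a - 1)) • C (n + 1) ω))
    (hmeasΓ : ∀ (n : ℤ) (c : ℝ), 0 < c → MeasurableSet {ω | c • K ⊆ Γ n ω})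
    (hmeasC : ∀ (n : ℤ) (c : ℝ), 0 < c → MeasurableSet {ω | c • K ⊆ C n ω})
    (hprobΓ : ∀ (n : ℤ) (c : ℝ), 0 < c →
      μ {ω | c • K ⊆ Γ n ω} = ENNReal.ofReal (Real.exp (-(c * L))))
    (hprobC : ∀ (n : ℤ) (c : ℝ), 0 < c →
      μ {ω | c • K ⊆ C n ω} = ENNReal.ofReal (Real.exp (-(c * L))))
    (hindep : ∀ n : ℤ,
      Indep
        (MeasurableSpace.generateFrom {s | ∃ c : ℝ, 0 < c ∧ s = {ω | c • K ⊆ C (n + 1) ω}})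
        (MeasurableSpace.generateFrom {s | ∃ m : ℤ, m ≤ n ∧ ∃ c : ℝ, 0 < c ∧
          (s = {ω | c • K ⊆ Γ m ω} ∨ s = {ω | c • K ⊆ C m ω})}) μ) :
    ∀ n : ℤ,
      μ ({ω | a • K ⊆ Γ n ω} ∩ {ω | K ⊆ Γ n ω} ∩ {ω | K ⊆ Γ (n - 1) ω})
        = ENNReal.ofReal (Real.exp (-((a + a⁻¹ - 2) * L)))
            * μ ({ω | K ⊆ Γ n ω} ∩ {ω | K ⊆ Γ (n - 1) ω}) := by
  intro n
  have ha0 : 0 < a := by linarith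
  have h0 : (0 : EuclideanSpace ℝ (Fin ℓ)) ∈ K := interior_subset hK0
  have hshrink : ∀ t : ℝ, 0 ≤ t → t ≤ 1 → t • K ⊆ K := by
    rintro t ht0 ht1 _ ⟨x, hx, rfl⟩
    exact hKconv.smul_mem_of_zero_mem h0 hx ⟨ht0, ht1⟩
  have hinv : a⁻¹ • K ⊆ K := hshrink _ (by positivity) (inv_le_one_of_one_le₀ ha.le)
  have hsub : K ⊆ a • K := (Set.subset_smul_set_iff₀ ha0.ne').2 hinv
  have hb : 0 < a / (a - 1) := div_pos ha0 (by linarith)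
  have hbi : 0 < (a / (a - 1))⁻¹ := inv_pos.2 hb
  have hrec' : ∀ ω, Γ n ω = (a • Γ (n - 1) ω) ∩ ((a / (a - 1)) • C n ω) := by
    intro ω
    have := hrec (n - 1) ω
    rwa [sub_add_cancel] at this
  have hA : {ω | a • K ⊆ Γ n ω} ∩ {ω | K ⊆ Γ n ω} ∩ {ω | K ⊆ Γ (n - 1) ω}
      = {ω | a • K ⊆ Γ n ω} := by
    ext ω
    simp only [Set.mem_inter_iff, Set.mem_setOf_eq]
    refine ⟨fun h => h.1.1, fun h => ⟨⟨h, hsub.trans h⟩, ?_⟩⟩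
    rw [hrec' ω] at h
    have h1 := (Set.subset_smul_set_iff₀ ha0.ne').1 (h.trans Set.inter_subset_left)
    rwa [inv_smul_smul₀ ha0.ne'] at h1
  have hB : {ω | K ⊆ Γ n ω} ∩ {ω | K ⊆ Γ (n - 1) ω}
      = {ω | (a / (a - 1))⁻¹ • K ⊆ C n ω} ∩ {ω | (1 : ℝ) • K ⊆ Γ (n - 1) ω} := by
    ext ω
    simp only [Set.mem_inter_iff, Set.mem_setOf_eq, one_smul]
    rw [hrec' ω, Set.subset_inter_iff, Set.subset_smul_set_iff₀ ha0.ne',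
      Set.subset_smul_set_iff₀ hb.ne']
    exact ⟨fun h => ⟨h.1.2, h.2⟩, fun h => ⟨⟨hinv.trans h.2, h.1⟩, h.2⟩⟩
  have hI := hindep (n - 1)
  rw [sub_add_cancel, ProbabilityTheory.Indep_iff] at hI
  rw [hA, hB, hI _ _ (MeasurableSpace.measurableSet_generateFrom ⟨_, hbi, rfl⟩)
    (MeasurableSpace.measurableSet_generateFrom ⟨n - 1, le_rfl, 1, one_pos, Or.inl rfl⟩),
    hprobΓ n a ha0, hprobΓ _ 1 one_pos, hprobC n _ hbi,
    ← ENNReal.ofReal_mul (Real.exp_nonneg _), ← ENNReal.ofReal_mul (Real.exp_nonneg _),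
    ← Real.exp_add, ← Real.exp_add]
  congr 2
  have : a - 1 ≠ 0 := by linarith
  field_simp
  ring
end

section
/- Under the hypotheses of the context, let α < β and α_1 ≤ β_1 < α_2 ≤ β_2 < ... < α_l ≤ β_l be integers with α < α_1, β_l < β, α_t < β_t, and β_t < α_{t+1} − 1 for t = 1,...,l−1. Set I_t = [α_t, β_t] ∩ ℤ, I = ⋃_{t=1}^l I_t, I^0 = [α, β] ∩ ℤ, Ĩ_t = [α_t + 1, β_t] ∩ ℤ, Ĩ = ⋃_{t=1}^l Ĩ_t, and let J ⊆ Ĩ. Let D = (⋂_{i∈I} {K ⊆ Γ_i}) ∩ (⋂_{i∈I^0\I} {K ⊆ Γ_i}ᶜ) and assume μ(D) > 0. Then μ((⋂_{j∈J} {a•K ⊆ Γ_j}) ∩ (⋂_{j∈Ĩ\J} {a•K ⊆ Γ_j}ᶜ) ∩ D) = exp(−(a + a^{−1} − 2)·|J|·L) · (1 − exp(−(a + a^{−1} − 2)·L))^{|Ĩ\J|} · μ(D); that is, conditionally on the pattern of the events {K ⊆ Γ_i}, i ∈ I^0, the indicators of {a•K ⊆ Γ_j} at the eligible positions j ∈ Ĩ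 are i.i.d. Bernoulli with success probability exp(−(a + a^{−1} − 2)·L). -/
open MeasureTheory ProbabilityTheory Pointwise

def auxD {Ω : Type*} (g : ℤ → ℝ → Set Ω) (I I' : Finset ℤ) (n : ℤ) : Set Ω :=
  (⋂ i ∈ I.filter (· ≤ n), g i 1) ∩ (⋂ i ∈ I'.filter (· ≤ n), (g i 1)ᶜ)

def auxA {Ω : Type*} (g : ℤ → ℝ → Set Ω) (a : ℝ) (J J' : Finset ℤ) (n : ℤ) : Set Ω :=
  (⋂ i ∈ J.filter (· ≤ n), g i a) ∩ (⋂ i ∈ J'.filter (· ≤ n), (g i a)ᶜ)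

theorem filter_succ_mem (I : Finset ℤ) (n : ℤ) (h : n + 1 ∈ I) :
    I.filter (· ≤ n + 1) = insert (n + 1) (I.filter (· ≤ n)) := by
  ext x; simp only [Finset.mem_filter, Finset.mem_insert]
  constructor
  · rintro ⟨h1, h2⟩
    by_cases hx : x = n + 1
    · exact Or.inl hx
    · exact Or.inr ⟨h1, by omega⟩
  · rintro (rfl | ⟨h1, h2⟩)
    · exact ⟨h, le_refl _⟩
    · exact ⟨h1, by omega⟩

theorem filter_succ_not_mem (I : Finset ℤ) (n : ℤ) (h : n + 1 ∉ I) :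
    I.filter (· ≤ n + 1) = I.filter (· ≤ n) := by
  ext x; simp only [Finset.mem_filter]
  constructor
  · rintro ⟨h1, h2⟩
    have hx : x ≠ n + 1 := by rintro rfl; exact h h1
    exact ⟨h1, by omega⟩
  · rintro ⟨h1, h2⟩
    exact ⟨h1, by omega⟩

theorem core {Ω : Type*} [mΩ : MeasurableSpace Ω] (μ : Measure Ω) [IsProbabilityMeasure μ]
    (a L : ℝ) (ha : 1 < a) (g e : ℤ → ℝ → Set Ω) (P : ℤ → MeasurableSpace Ω)
    (hP : ∀ n, P n ≤ mΩ)
    (hgP : ∀ n m c, m ≤ n → 0 < c → MeasurableSet[P n] (g m c))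
    (hem : ∀ n c, 0 < c → MeasurableSet (e n c))
    (hmono : ∀ n c d, 0 < c → c ≤ d → g n d ⊆ g n c)
    (hemono : ∀ n c d, 0 < c → c ≤ d → e n d ⊆ e n c)
    (hrec : ∀ n c, 0 < c → g (n + 1) c = g n (c / a) ∩ e (n + 1) (c * ((a - 1) / a)))
    (hi : ∀ n c S, 0 < c → MeasurableSet[P n] S →
      μ.real (S ∩ e (n + 1) c) = μ.real S * Real.exp (-(c * L)))
    (I I' Itil J : Finset ℤ) (hII : Disjoint I I') (hItil : ∀ j ∈ Itil, j ∈ I ∧ j - 1 ∈ I)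
    (hJ : J ⊆ Itil) (q : ℝ) (hq : q = Real.exp (-((a + a⁻¹ - 2) * L))) (N : ℤ)
    (hN : ∀ i ∈ I ∪ I', N < i) (n : ℤ) (hn : N ≤ n) :
    μ.real (auxD g I I' n ∩ auxA g a J (Itil \ J) n)
        = (∏ j ∈ Itil.filter (· ≤ n), if j ∈ J then q else 1 - q) * μ.real (auxD g I I' n) ∧
    ∀ c, 0 < c → c ≤ 1 → μ.real (auxD g I I' n ∩ auxA g a J (Itil \ J) n ∩ g n c)
        = (∏ j ∈ Itil.filter (· ≤ n), if j ∈ J then q else 1 - q)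
          * μ.real (auxD g I I' n ∩ g n c) := by
  have ha0 : 0 < a := by linarith
  have hDm : ∀ n, MeasurableSet[P n] (auxD g I I' n) := by
    intro n
    refine MeasurableSet.inter (Finset.measurableSet_biInter _ fun i h => ?_)
      (Finset.measurableSet_biInter _ fun i h => MeasurableSet.compl ?_)
    all_goals exact hgP _ _ _ (Finset.mem_filter.1 h).2 one_pos
  have hAm : ∀ n, MeasurableSet[P n] (auxA g a J (Itil \ J) n) := by
    intro n
    refine MeasurableSet.inter (Finset.measurableSet_biInter _ fun i h => ?_)
      (Finset.measurableSet_biInter _ fun i h => MeasurableSet.compl ?_)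
    all_goals exact hgP _ _ _ (Finset.mem_filter.1 h).2 ha0
  induction n, hn using Int.le_induction with
  | base =>
    have e1 : ∀ T : Finset ℤ, (∀ i ∈ T, N < i) → T.filter (· ≤ N) = ∅ := by
      intro T hT
      rw [Finset.filter_eq_empty_iff]
      intro i hi; have := hT i hi; omega
    have hIt : ∀ i ∈ Itil, N < i := fun i hi => hN i (Finset.mem_union_left _ (hItil i hi).1)
    have hA : auxA g a J (Itil \ J) N = Set.univ := by
      simp [auxA, e1 J (fun i hi => hIt i (hJ hi)),
        e1 (Itil \ J) (fun i hi => hIt i (Finset.mem_sdiff.1 hi).1)]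
    simp [hA, e1 Itil hIt]
  | succ n hn ih =>
    set D := auxD g I I' n with hD
    set A := auxA g a J (Itil \ J) n with hA
    set p := ∏ j ∈ Itil.filter (· ≤ n), (if j ∈ J then q else 1 - q) with hp
    obtain ⟨ih1, ih2⟩ := ih
    have hFm : MeasurableSet[P n] (D ∩ A) := (hDm n).inter (hAm n)
    -- transfer
    have htr : ∀ c, 0 < c → c ≤ 1 →
        μ.real (D ∩ A ∩ g (n + 1) c) = p * μ.real (D ∩ g (n + 1) c) := by
      intro c hc hc1
      have h1 : 0 < c / a := by positivity
      have h2 : 0 < c * ((a - 1) / a) := mul_pos hc (div_pos (by linarith) ha0)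
      rw [hrec n c hc, ← Set.inter_assoc, ← Set.inter_assoc,
        hi n _ _ h2 (hFm.inter (hgP n n _ le_rfl h1)),
        hi n _ _ h2 ((hDm n).inter (hgP n n _ le_rfl h1)), ih2 _ h1
          ((div_le_one ha0).2 (by linarith)), mul_assoc]
    have hG : MeasurableSet (g (n + 1) 1) := hP _ _ (hgP (n+1) (n+1) 1 le_rfl one_pos)
    by_cases ht : n + 1 ∈ Itil
    · obtain ⟨hI1, hI2⟩ := hItil _ ht
      have hI' : n + 1 ∉ I' := fun h => Finset.disjoint_left.1 hII hI1 h
      have hD1 : auxD g I I' (n + 1) = D ∩ g (n + 1) 1 := by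
        rw [hD, auxD, auxD, filter_succ_mem _ _ hI1, filter_succ_not_mem _ _ hI',
          Finset.set_biInter_insert]
        ext x; simp only [Set.mem_inter_iff]; tauto
      have hDg : D ⊆ g n 1 := by
        intro x hx
        have := hx.1
        simp only [Set.mem_iInter] at this
        exact this n (Finset.mem_filter.2 ⟨by simpa using hI2, le_rfl⟩)
      have h0 : 0 < (a - 1) / a := div_pos (by linarith) ha0
      have h01 : (a - 1) / a ≤ a - 1 := by
        rw [div_le_iff₀ ha0]; nlinarith
      have hDG : ∀ x ∈ D, (x ∈ g (n + 1) 1 ↔ x ∈ e (n + 1) ((a - 1) / a)) := by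
        intro x hx
        rw [hrec n 1 one_pos, one_mul]
        have := hmono n (1 / a) 1 (by positivity) ((div_le_one ha0).2 ha.le) (hDg hx)
        simp [this] at *
        tauto
      have hDA : ∀ x ∈ D, (x ∈ g (n + 1) a ↔ x ∈ e (n + 1) (a - 1)) := by
        intro x hx
        rw [hrec n a ha0, div_self ha0.ne', mul_div_cancel₀ _ ha0.ne']
        have := hDg hx
        simp only [Set.mem_inter_iff, this, true_and]
      have hee : e (n + 1) (a - 1) ⊆ e (n + 1) ((a - 1) / a) := hemono _ _ _ h0 h01
      have hexp : Real.exp (-((a - 1) * L)) = q * Real.exp (-((a - 1) / a * L)) := by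
        rw [hq, ← Real.exp_add]; congr 1; field_simp; ring
      have hμD : μ.real (D ∩ g (n + 1) 1) = μ.real D * Real.exp (-((a - 1) / a * L)) := by
        rw [← hi n _ _ h0 (hDm n)]; congr 1; ext x
        simp only [Set.mem_inter_iff]
        exact and_congr_right (hDG x)
      have key : μ.real (auxD g I I' (n + 1) ∩ auxA g a J (Itil \ J) (n + 1))
        = (∏ j ∈ Itil.filter (· ≤ n + 1), if j ∈ J then q else 1 - q)
          * μ.real (auxD g I I' (n + 1)) := by
        rw [filter_succ_mem _ _ ht, Finset.prod_insert (by simp), ← hp, hD1, hμD]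
        by_cases hj : n + 1 ∈ J
        · have hj' : n + 1 ∉ Itil \ J := by simp [hj]
          have hA1 : auxA g a J (Itil \ J) (n + 1) = A ∩ g (n + 1) a := by
            rw [hA, auxA, auxA, filter_succ_mem _ _ hj, filter_succ_not_mem _ _ hj',
              Finset.set_biInter_insert]
            ext x; simp only [Set.mem_inter_iff]; tauto
          have : D ∩ g (n + 1) 1 ∩ auxA g a J (Itil \ J) (n + 1)
              = D ∩ A ∩ e (n + 1) (a - 1) := by
            rw [hA1]; ext x; simp only [Set.mem_inter_iff]
            constructor
            · rintro ⟨⟨h1, h2⟩, h3, h4⟩; exact ⟨⟨h1, h3⟩, (hDA x h1).1 h4⟩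
            · rintro ⟨⟨h1, h3⟩, h4⟩
              exact ⟨⟨h1, (hDG x h1).2 (hee h4)⟩, h3, (hDA x h1).2 h4⟩
          rw [this, hi n _ _ (by linarith) hFm, ih1, hexp, if_pos hj]; ring
        · have hj' : n + 1 ∈ Itil \ J := by simp [hj, ht]
          have hA1 : auxA g a J (Itil \ J) (n + 1) = A ∩ (g (n + 1) a)ᶜ := by
            rw [hA, auxA, auxA, filter_succ_not_mem _ _ hj, filter_succ_mem _ _ hj',
              Finset.set_biInter_insert]
            ext x; simp only [Set.mem_inter_iff]; tauto
          have : D ∩ g (n + 1) 1 ∩ auxA g a J (Itil \ J) (n + 1)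
              = (D ∩ A ∩ e (n + 1) ((a - 1) / a)) \ (D ∩ A ∩ e (n + 1) (a - 1)) := by
            rw [hA1]; ext x
            simp only [Set.mem_inter_iff, Set.mem_sdiff, Set.mem_compl_iff]
            constructor
            · rintro ⟨⟨h1, h2⟩, h3, h4⟩
              exact ⟨⟨⟨h1, h3⟩, (hDG x h1).1 h2⟩, fun h => h4 ((hDA x h1).2 h.2)⟩
            · rintro ⟨⟨⟨h1, h3⟩, h2⟩, h4⟩
              exact ⟨⟨h1, (hDG x h1).2 h2⟩, h3, fun h => h4 ⟨⟨h1, h3⟩, (hDA x h1).1 h⟩⟩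
          rw [this, measureReal_sdiff (Set.inter_subset_inter_right _ hee)
            ((hP _ _ hFm).inter (hem _ _ (by linarith))),
            hi n (a - 1) _ (by linarith) hFm, hi n _ _ h0 hFm, ih1, hexp, if_neg hj]; ring
      refine ⟨key, fun c hc hc1 => ?_⟩
      have hsub : auxD g I I' (n + 1) ⊆ g (n + 1) c := by
        rw [hD1]; exact Set.inter_subset_right.trans (hmono _ _ _ hc hc1)
      rw [Set.inter_eq_left.2 hsub, Set.inter_eq_left.2 (Set.inter_subset_left.trans hsub)]
      exact key
    · have hj : n + 1 ∉ J := fun h => ht (hJ h)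
      have hj' : n + 1 ∉ Itil \ J := by simp [ht]
      have hA1 : auxA g a J (Itil \ J) (n + 1) = A := by
        rw [hA, auxA, auxA, filter_succ_not_mem _ _ hj, filter_succ_not_mem _ _ hj']
      rw [hA1, filter_succ_not_mem _ _ ht, ← hp]
      by_cases hI1 : n + 1 ∈ I
      · have hI' : n + 1 ∉ I' := fun h => Finset.disjoint_left.1 hII hI1 h
        have hD1 : auxD g I I' (n + 1) = D ∩ g (n + 1) 1 := by
          rw [hD, auxD, auxD, filter_succ_mem _ _ hI1, filter_succ_not_mem _ _ hI',
            Finset.set_biInter_insert]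
          ext x; simp only [Set.mem_inter_iff]; tauto
        have key : μ.real (auxD g I I' (n + 1) ∩ A) = p * μ.real (auxD g I I' (n + 1)) := by
          rw [hD1, Set.inter_right_comm]; exact htr 1 one_pos le_rfl
        refine ⟨key, fun c hc hc1 => ?_⟩
        have hsub : auxD g I I' (n + 1) ⊆ g (n + 1) c := by
          rw [hD1]; exact Set.inter_subset_right.trans (hmono _ _ _ hc hc1)
        rw [Set.inter_eq_left.2 hsub, Set.inter_eq_left.2 (Set.inter_subset_left.trans hsub)]
        exact key
      · by_cases hI' : n + 1 ∈ I'
        · have hD1 : auxD g I I' (n + 1) = D \ g (n + 1) 1 := by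
            rw [hD, auxD, auxD, filter_succ_not_mem _ _ hI1, filter_succ_mem _ _ hI',
              Finset.set_biInter_insert]
            ext x; simp only [Set.mem_inter_iff, Set.mem_sdiff, Set.mem_compl_iff]; tauto
          rw [hD1]
          constructor
          · have e1 := measureReal_inter_add_sdiff (μ := μ) (s := (D ∩ A)) hG
            have e2 := measureReal_inter_add_sdiff (μ := μ) (s := D) hG
            have e3 := htr 1 one_pos le_rfl
            have e4 : D \ g (n + 1) 1 ∩ A = (D ∩ A) \ g (n + 1) 1 := by
              ext x; simp only [Set.mem_inter_iff, Set.mem_sdiff]; tauto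
            rw [e4]
            linear_combination e1 - p * e2 + ih1 - e3
          · intro c hc hc1
            have hs := hmono (n + 1) _ _ hc hc1
            have e1 := measureReal_inter_add_sdiff (μ := μ) (s := (D ∩ A ∩ g (n + 1) c)) hG
            have e2 := measureReal_inter_add_sdiff (μ := μ) (s := (D ∩ g (n + 1) c)) hG
            have e3 := htr 1 one_pos le_rfl
            have e5 := htr c hc hc1
            have e4 : D \ g (n + 1) 1 ∩ A ∩ g (n + 1) c
                = (D ∩ A ∩ g (n + 1) c) \ g (n + 1) 1 := by
              ext x; simp only [Set.mem_inter_iff, Set.mem_sdiff]; tauto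
            have e6 : D \ g (n + 1) 1 ∩ g (n + 1) c
                = (D ∩ g (n + 1) c) \ g (n + 1) 1 := by
              ext x; simp only [Set.mem_inter_iff, Set.mem_sdiff]; tauto
            rw [Set.inter_assoc, Set.inter_eq_right.2 hs] at e1 e2
            rw [e4, e6]
            linear_combination e1 - p * e2 + e5 - e3
        · have hD1 : auxD g I I' (n + 1) = D := by
            rw [hD, auxD, auxD, filter_succ_not_mem _ _ hI1, filter_succ_not_mem _ _ hI']
          rw [hD1]
          exact ⟨ih1, htr⟩

/-- Under the hypotheses of the context, let `α < β` and
`α₁ ≤ β₁ < α₂ ≤ β₂ < … < α_l ≤ β_l` be integers with `α < α₁`, `β_l < β`,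
`α_t < β_t` and `β_t < α_{t+1} - 1`.  Set `I_t = [α_t, β_t] ∩ ℤ`, `I = ⋃ I_t`,
`I⁰ = [α, β] ∩ ℤ`, `Ĩ_t = [α_t + 1, β_t] ∩ ℤ`, `Ĩ = ⋃ Ĩ_t`, and let `J ⊆ Ĩ`.
Let `D = (⋂_{i∈I} {K ⊆ Γ i}) ∩ (⋂_{i∈I⁰\I} {K ⊆ Γ i}ᶜ)` and assume `μ D > 0`.  Then
`μ ((⋂_{j∈J} {a•K ⊆ Γ j}) ∩ (⋂_{j∈Ĩ\J} {a•K ⊆ Γ j}ᶜ) ∩ D)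
  = exp (-(a + a⁻¹ - 2)·|J|·L) · (1 - exp (-(a + a⁻¹ - 2)·L))^{|Ĩ\J|} · μ D`. -/
theorem stmt11 {ℓ : ℕ} (hℓ : 1 ≤ ℓ) (K : Set (EuclideanSpace ℝ (Fin ℓ)))
    (hKcomp : IsCompact K) (hKconv : Convex ℝ K)
    (hK0 : (0 : EuclideanSpace ℝ (Fin ℓ)) ∈ interior K)
    (L a : ℝ) (hL : 0 < L) (ha : 1 < a)
    {Ω : Type*} [MeasurableSpace Ω] (μ : Measure Ω) [IsProbabilityMeasure μ]
    (Γ C : ℤ → Ω → Set (EuclideanSpace ℝ (Fin ℓ)))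
    (hrec : ∀ (n : ℤ) (ω : Ω), Γ (n + 1) ω = (a • Γ n ω) ∩ ((a / (a - 1)) • C (n + 1) ω))
    (hmeasΓ : ∀ (n : ℤ) (c : ℝ), 0 < c → MeasurableSet {ω | c • K ⊆ Γ n ω})
    (hmeasC : ∀ (n : ℤ) (c : ℝ), 0 < c → MeasurableSet {ω | c • K ⊆ C n ω})
    (hprobΓ : ∀ (n : ℤ) (c : ℝ), 0 < c →
      μ {ω | c • K ⊆ Γ n ω} = ENNReal.ofReal (Real.exp (-(c * L))))
    (hprobC : ∀ (n : ℤ) (c : ℝ), 0 < c →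
      μ {ω | c • K ⊆ C n ω} = ENNReal.ofReal (Real.exp (-(c * L))))
    (hindep : ∀ n : ℤ,
      Indep
        (MeasurableSpace.generateFrom {s | ∃ c : ℝ, 0 < c ∧ s = {ω | c • K ⊆ C (n + 1) ω}})
        (MeasurableSpace.generateFrom {s | ∃ m : ℤ, m ≤ n ∧ ∃ c : ℝ, 0 < c ∧
          (s = {ω | c • K ⊆ Γ m ω} ∨ s = {ω | c • K ⊆ C m ω})}) μ)
    -- the interval data
    (α β : ℤ) (l : ℕ) (hl : 0 < l) (αs βs : Fin l → ℤ)
    (hαβ : ∀ t, αs t < βs t)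
    (hgap : ∀ (t : Fin l) (h : (t : ℕ) + 1 < l), βs t < αs ⟨(t : ℕ) + 1, h⟩ - 1)
    (hα : α < αs ⟨0, hl⟩)
    (hβ : βs ⟨l - 1, Nat.sub_lt hl Nat.one_pos⟩ < β)
    (I I0 Itil : Finset ℤ)
    (hI : I = Finset.univ.biUnion (fun t : Fin l => Finset.Icc (αs t) (βs t)))
    (hI0 : I0 = Finset.Icc α β)
    (hItil : Itil = Finset.univ.biUnion (fun t : Fin l => Finset.Icc (αs t + 1) (βs t)))
    (J : Finset ℤ) (hJ : J ⊆ Itil)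
    (D : Set Ω)
    (hD : D = (⋂ i ∈ I, {ω | K ⊆ Γ i ω}) ∩ (⋂ i ∈ I0 \ I, {ω | K ⊆ Γ i ω}ᶜ))
    (hDpos : 0 < μ D) :
    μ ((⋂ j ∈ J, {ω | a • K ⊆ Γ j ω}) ∩ (⋂ j ∈ Itil \ J, {ω | a • K ⊆ Γ j ω}ᶜ) ∩ D)
      = ENNReal.ofReal
          (Real.exp (-((a + a⁻¹ - 2) * (J.card : ℝ) * L))
            * (1 - Real.exp (-((a + a⁻¹ - 2) * L))) ^ (Itil \ J).card)
        * μ D := by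
  have ha0 : 0 < a := by linarith
  have h0K : (0 : EuclideanSpace ℝ (Fin ℓ)) ∈ K := interior_subset hK0
  have hKm : ∀ c d : ℝ, 0 < c → c ≤ d → c • K ⊆ d • K := by
    rintro c d hc hcd x ⟨y, hy, rfl⟩
    have hd : 0 < d := hc.trans_le hcd
    refine ⟨(c / d) • y, hKconv.smul_mem_of_zero_mem h0K hy
      ⟨by positivity, (div_le_one hd).2 hcd⟩, ?_⟩
    simp only [smul_smul]
    rw [mul_div_cancel₀ _ hd.ne']
  have hsc : ∀ (b c : ℝ) (S : Set (EuclideanSpace ℝ (Fin ℓ))), 0 < b →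
      (c • K ⊆ b • S ↔ (c / b) • K ⊆ S) := by
    intro b c S hb
    rw [Set.subset_smul_set_iff₀ hb.ne', smul_smul, inv_mul_eq_div]
  set P : ℤ → MeasurableSpace Ω := fun n =>
    (MeasurableSpace.generateFrom {s | ∃ m : ℤ, m ≤ n ∧ ∃ c : ℝ, 0 < c ∧
          (s = {ω | c • K ⊆ Γ m ω} ∨ s = {ω | c • K ⊆ C m ω})}) with hPdef
  obtain ⟨N, hN⟩ : ∃ N : ℤ, ∀ i ∈ I ∪ (I0 \ I), N < i := by
    obtain ⟨N, hN⟩ := (I ∪ (I0 \ I)).bddBelow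
    exact ⟨N - 1, fun i hi => by have := hN hi; omega⟩
  obtain ⟨M, hM⟩ := (I ∪ (I0 \ I)).bddAbove
  have hIt : ∀ j ∈ Itil, j ∈ I ∧ j - 1 ∈ I := by
    intro j hj
    rw [hItil] at hj
    rw [hI]
    simp only [Finset.mem_biUnion, Finset.mem_univ, true_and, Finset.mem_Icc] at hj ⊢
    obtain ⟨t, h1, h2⟩ := hj
    exact ⟨⟨t, by omega, h2⟩, ⟨t, by omega, by omega⟩⟩
  have hc := (core μ a L ha (fun n c => {ω | c • K ⊆ Γ n ω}) (fun n c => {ω | c • K ⊆ C n ω}) P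
    (fun n => MeasurableSpace.generateFrom_le (by
      rintro s ⟨m, -, c, hc, rfl | rfl⟩
      · exact hmeasΓ m c hc
      · exact hmeasC m c hc))
    (fun n m c hm hc => MeasurableSpace.measurableSet_generateFrom ⟨m, hm, c, hc, Or.inl rfl⟩)
    hmeasC
    (fun n c d hc hcd ω h => (hKm c d hc hcd).trans h)
    (fun n c d hc hcd ω h => (hKm c d hc hcd).trans h)
    (fun n c hc => by
      ext ω
      have : 0 < a / (a - 1) := div_pos ha0 (by linarith)
      simp only [Set.mem_setOf_eq, Set.mem_inter_iff]
      rw [hrec, Set.subset_inter_iff, hsc _ _ _ ha0, hsc _ _ _ this, div_div_eq_mul_div,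
        mul_div_assoc])
    (fun n c S hc hS => by
      have := ((Indep_iff _ _ _).1 (hindep n)) _ _
        (MeasurableSpace.measurableSet_generateFrom ⟨c, hc, rfl⟩) hS
      rw [Set.inter_comm, measureReal_def, this, hprobC _ _ hc, ENNReal.toReal_mul,
        ENNReal.toReal_ofReal (Real.exp_pos _).le, mul_comm]
      rfl)
    I (I0 \ I) Itil J Finset.disjoint_sdiff hIt hJ _ rfl N hN (max N M) (le_max_left _ _)).1
  have hfil : ∀ T : Finset ℤ, T ⊆ I ∪ (I0 \ I) → T.filter (· ≤ max N M) = T := by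
    intro T hT
    rw [Finset.filter_eq_self]
    intro i hi
    exact le_max_of_le_right (hM (hT hi))
  have hItI : Itil ⊆ I ∪ (I0 \ I) := fun j hj => Finset.mem_union_left _ (hIt j hj).1
  rw [auxD, auxA, hfil _ Finset.subset_union_left, hfil _ Finset.subset_union_right, hfil _ hItI,
    hfil _ (hJ.trans hItI), hfil _ (Finset.sdiff_subset.trans hItI)] at hc
  simp only [one_smul] at hc
  rw [← hD, Finset.prod_ite, Finset.prod_const, Finset.prod_const,
    Finset.filter_mem_eq_inter, Finset.inter_eq_right.2 hJ, Finset.filter_notMem_eq_sdiff] at hc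
  have hq1 : Real.exp (-((a + a⁻¹ - 2) * L)) ≤ 1 := by
    rw [Real.exp_le_one_iff]
    have : a + a⁻¹ - 2 = (a - 1) ^ 2 / a := by field_simp; ring
    rw [this]
    have : 0 ≤ (a - 1) ^ 2 / a * L := by positivity
    linarith
  have hpw : Real.exp (-((a + a⁻¹ - 2) * (J.card : ℝ) * L))
      = Real.exp (-((a + a⁻¹ - 2) * L)) ^ J.card := by
    rw [← Real.exp_nat_mul]; congr 1; ring
  rw [hpw, Set.inter_comm, ← ENNReal.toReal_eq_toReal_iff' (measure_ne_top _ _)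
    (ENNReal.mul_ne_top ENNReal.ofReal_ne_top (measure_ne_top _ _)), ENNReal.toReal_mul,
    ENNReal.toReal_ofReal (mul_nonneg (by positivity) (pow_nonneg (by linarith) _))]
  exact hc
end
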